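/- Let p be an odd prime and let n ≥ 1. The number of similarity classes of primitive nondegenerate quadratic forms in 3 variables integral over ℤ_p whose discriminant ideal equals (pⁿ) is exactly 2n. (Via the correspondence between ternary forms and quaternion orders, this is the number of isomorphism classes of Gorenstein ℤ_p-orders in quaternion algebras with reduced discriminant (pⁿ).) -/

import Mathlib

/-- The Gram matrix `M_f` of a quadratic form `f` in `n` variables. -/
noncomputable def gramMatrix {R : Type*} [CommRing R] {n : ℕ}
    (f : QuadraticForm R (Fin n → R)) : Matrix (Fin n) (Fin n) R :=
  Matrix.of fun i j => QuadraticMap.polar f (Pi.single i 1) (Pi.single j 1)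

/-- The ideal generated by the coefficients `a_{ij}` of a quadratic form
`f = Σ_{i ≤ j} a_{ij} X_i X_j`. -/
noncomputable def coeffIdeal {R : Type*} [CommRing R] {n : ℕ}
    (f : QuadraticForm R (Fin n → R)) : Ideal R :=
  Ideal.span ((Set.range fun i => f (Pi.single i 1)) ∪
    (Set.range fun ij : Fin n × Fin n =>
      QuadraticMap.polar f (Pi.single ij.1 1) (Pi.single ij.2 1)))

/-- A quadratic form is primitive if the ideal generated by its coefficients is the whole ring. -/
noncomputable def IsPrimitiveForm {R : Type*} [CommRing R] {n : ℕ}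
    (f : QuadraticForm R (Fin n → R)) : Prop :=
  coeffIdeal f = ⊤

/-- Two quadratic forms are similar if a unit multiple of one is isometric to the other. -/
def SimilarForm {R : Type*} [CommRing R] {n : ℕ}
    (f g : QuadraticForm R (Fin n → R)) : Prop :=
  ∃ u : Rˣ, ((u : R) • f).Equivalent g

/-!
Since `2` is a unit, every form over a discrete valuation ring diagonalises, so a primitive ternary
form is similar to some `⟨1, u ϖᵃ, v ϖᵇ⟩` with units `u`, `v`, `a ≤ b` and `a + b = n`. Modulo
squares there are two classes of units, because the residue field is finite of odd characteristic
and squares lift by Hensel's lemma.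

If `c ⟨1, y, z⟩` is isometric to `⟨1, y₁, z₁⟩`, then the exterior square `⟨y₁, z₁, y₁ z₁⟩` of the
latter represents `c² y`. For `y = u ϖᵃ` and `z = v ϖᵇ` this shows that `a` is an invariant, and so
is the square class of `u` when `a < b`. When `0 < a`, the multiplier `c` is a square, and comparing
determinants shows that the square class of `u v` is an invariant.

Conversely `⟨1, u⟩` represents every unit, so `v` is redundant when `a = 0`, and `u`, `v` may be
multiplied by a common unit when `a = b`. Hence `a = 0` and `a = n / 2` contribute two classes each
and every other `a` contributes four: `2 n` classes in total.
-/

open QuadraticMap IsLocalRing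

section Similarity

variable {R : Type*} [CommRing R] {n : ℕ} {f g h : QuadraticForm R (Fin n → R)}

theorem SimilarForm.of_equivalent (hfg : f.Equivalent g) : SimilarForm f g :=
  ⟨1, by rwa [Units.val_one, one_smul]⟩

theorem SimilarForm.symm (hfg : SimilarForm f g) : SimilarForm g f := by
  obtain ⟨u, ⟨e⟩⟩ := hfg
  refine ⟨u⁻¹, ⟨e.toLinearEquiv.symm, fun x => ?_⟩⟩
  have hx : u * f (e.symm x) = g x := by simpa using (e.map_app (e.symm x)).symm
  simp only [smul_apply, ← hx, smul_eq_mul, Units.inv_mul_cancel_left]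
  rfl

theorem SimilarForm.trans (hfg : SimilarForm f g) (hgh : SimilarForm g h) : SimilarForm f h := by
  obtain ⟨u, ⟨e⟩⟩ := hfg
  obtain ⟨v, ⟨e'⟩⟩ := hgh
  refine ⟨v * u, ⟨e.toLinearEquiv.trans e'.toLinearEquiv, fun x => ?_⟩⟩
  have hx : g (e x) = u * f x := e.map_app x
  calc h (e' (e x)) = v * g (e x) := e'.map_app (e x)
    _ = ((v * u : Rˣ) : R) • f x := by rw [hx, Units.val_mul, smul_eq_mul, mul_assoc]

theorem similarForm_equivalence : Equivalence (SimilarForm (R := R) (n := n)) :=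
  ⟨fun f => .of_equivalent (.refl f), .symm, .trans⟩

theorem equivalent_of_forall_mulVec {A : Matrix (Fin n) (Fin n) R} (hA : IsUnit A.det)
    (h : ∀ x, g (A.mulVec x) = f x) : f.Equivalent g :=
  ⟨Matrix.toLin'OfInv (A.nonsing_inv_mul hA) (A.mul_nonsing_inv hA), h⟩

theorem gramMatrix_smul (c : R) (f : QuadraticForm R (Fin n → R)) :
    gramMatrix (c • f) = c • gramMatrix f := by
  ext i j
  simp [gramMatrix, polar_smul]

theorem gramMatrix_eq_toMatrix₂' (f : QuadraticForm R (Fin n → R)) :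
    gramMatrix f = LinearMap.toMatrix₂' R (polarBilin f) := by
  ext i j
  simp [gramMatrix, LinearMap.toMatrix₂'_apply]

theorem exists_det_gramMatrix_eq (e : f.IsometryEquiv g) :
    ∃ d : Rˣ, (gramMatrix f).det = d ^ 2 * (gramMatrix g).det := by
  let A := LinearMap.toMatrix' (e.toLinearEquiv : (Fin n → R) →ₗ[R] (Fin n → R))
  have hA : IsUnit A.det := by
    rw [LinearMap.det_toMatrix']
    exact e.toLinearEquiv.isUnit_det'
  have hfg : gramMatrix f = A.transpose * gramMatrix g * A := by
    rw [gramMatrix_eq_toMatrix₂', gramMatrix_eq_toMatrix₂', ← LinearMap.toMatrix₂'_compl₁₂]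
    congr 1
    ext x y
    simp [polar, ← map_add]
  refine ⟨hA.unit, ?_⟩
  rw [hfg, Matrix.det_mul, Matrix.det_mul, Matrix.det_transpose, IsUnit.unit_spec]
  ring

theorem SimilarForm.associated_det_gramMatrix (hfg : SimilarForm f g) :
    Associated (gramMatrix f).det (gramMatrix g).det := by
  obtain ⟨u, ⟨e⟩⟩ := hfg
  obtain ⟨d, hd⟩ := exists_det_gramMatrix_eq e
  rw [gramMatrix_smul, Matrix.det_smul, Fintype.card_fin, ← Units.val_pow_eq_pow_val,
    ← Units.val_pow_eq_pow_val] at hd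
  exact (associated_unit_mul_right _ _ (u ^ n).isUnit).trans
    (hd ▸ associated_unit_mul_left _ _ (d ^ 2).isUnit)

theorem dvd_polar {M : Type*} [AddCommGroup M] [Module R M] {Q : QuadraticForm R M} {d : R}
    (hd : ∀ x, d ∣ Q x) (x y : M) : d ∣ polar Q x y :=
  dvd_sub (dvd_sub (hd _) (hd _)) (hd _)

theorem IsPrimitiveForm.isUnit_of_forall_dvd (hf : IsPrimitiveForm f) {d : R}
    (hd : ∀ x, d ∣ f x) : IsUnit d := by
  rw [← Ideal.span_singleton_eq_top, ← top_le_iff, ← show coeffIdeal f = ⊤ from hf, coeffIdeal,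
    Ideal.span_le]
  rintro _ (⟨i, rfl⟩ | ⟨ij, rfl⟩)
  · exact Ideal.mem_span_singleton.2 (hd _)
  · exact Ideal.mem_span_singleton.2 (dvd_polar hd _ _)

theorem isPrimitiveForm_of_isUnit {i : Fin n} (hf : IsUnit (f (Pi.single i 1))) :
    IsPrimitiveForm f :=
  Ideal.eq_top_of_isUnit_mem _ (Ideal.subset_span (.inl ⟨i, rfl⟩)) hf

end Similarity

section Diagonal

variable {R : Type*} [CommRing R] {n : ℕ}

/-- The diagonal form `⟨w₁, …, wₙ⟩ = Σ wᵢ Xᵢ²`: Mathlib's `weightedSumSquares` with weights in the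
base ring. -/
def diagForm (w : Fin n → R) : QuadraticForm R (Fin n → R) :=
  weightedSumSquares R w

theorem diagForm_apply (w x : Fin n → R) : diagForm w x = ∑ i, w i * (x i * x i) :=
  weightedSumSquares_apply ..

theorem diagForm_apply_single (w : Fin n → R) (i : Fin n) : diagForm w (Pi.single i 1) = w i := by
  simp [diagForm_apply, Pi.single_apply]

theorem polar_diagForm (w x y : Fin n → R) :
    polar (diagForm w) x y = 2 * ∑ i, w i * (x i * y i) := by
  simp only [polar, diagForm_apply, Pi.add_apply, Finset.mul_sum, ← Finset.sum_sub_distrib]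
  exact Finset.sum_congr rfl fun i _ => by ring

theorem diagForm_cons_three (x y z : R) (v : Fin 3 → R) :
    diagForm ![x, y, z] v = x * v 0 ^ 2 + y * v 1 ^ 2 + z * v 2 ^ 2 := by
  simp [diagForm_apply, Fin.sum_univ_three, pow_two]

theorem gramMatrix_diagForm (w : Fin n → R) :
    gramMatrix (diagForm w) = Matrix.diagonal (2 * w) := by
  ext i j
  rcases eq_or_ne i j with rfl | hij
  · simp [gramMatrix, polar_diagForm, Pi.single_apply]
  · simp [gramMatrix, polar_diagForm, Pi.single_apply, hij, hij.symm]

theorem det_gramMatrix_diagForm (w : Fin n → R) :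
    (gramMatrix (diagForm w)).det = 2 ^ n * ∏ i, w i := by
  simp [gramMatrix_diagForm, Matrix.det_diagonal, Finset.prod_mul_distrib]

theorem similarForm_diagForm_of_forall_mul_eq {w w' : Fin n → R} (c : Rˣ) (α : Fin n → Rˣ)
    (h : ∀ i, c * w i = w' i * α i ^ 2) : SimilarForm (diagForm w) (diagForm w') := by
  refine ⟨c, ⟨LinearEquiv.piCongrRight fun i => LinearEquiv.smulOfUnit (α i), fun x => ?_⟩⟩
  change diagForm w' (fun i => (α i : R) * x i) = c * diagForm w x
  rw [diagForm_apply, diagForm_apply, Finset.mul_sum]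
  exact Finset.sum_congr rfl fun i _ => by linear_combination -(x i ^ 2) * h i

theorem diagForm_comp_equivalent (w : Fin n → R) (σ : Equiv.Perm (Fin n)) :
    (diagForm (w ∘ σ)).Equivalent (diagForm w) := by
  refine ⟨LinearEquiv.funCongrLeft R R σ.symm, fun x => ?_⟩
  change diagForm w (x ∘ σ.symm) = diagForm (w ∘ σ) x
  rw [diagForm_apply, diagForm_apply, ← Equiv.sum_comp σ]
  simp

end Diagonal

section Diagonalization

variable {R : Type*} [CommRing R] {M : Type*} [AddCommGroup M] [Module R M]

/-- A basis adapted to the Jordan splitting of `Q`: orthogonal, and with the values of `Q` ordered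
by divisibility. -/
structure IsJordanBasis (Q : QuadraticForm R M) {k : ℕ} (b : Module.Basis (Fin k) R M) : Prop where
  polar_eq_zero : ∀ i j, i ≠ j → polar Q (b i) (b j) = 0
  dvd : ∀ i j, i ≤ j → Q (b i) ∣ Q (b j)

theorem exists_forall_apply_dvd [IsDomain R] [ValuationRing R] [WfDvdMonoid R]
    (Q : QuadraticForm R M) : ∃ v, ∀ x, Q v ∣ Q x := by
  obtain ⟨_, ⟨v, rfl⟩, hv⟩ := (wellFounded_dvdNotUnit (α := R)).has_min (Set.range Q) ⟨Q 0, 0, rfl⟩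
  refine ⟨v, fun x => ?_⟩
  by_contra hvx
  have hxv : Q x ∣ Q v := (ValuationRing.dvd_total _ _).resolve_left hvx
  exact hv (Q x) ⟨x, rfl⟩ (dvdNotUnit_of_dvd_of_not_dvd hxv hvx)

theorem eq_zero_of_smul_add_eq_zero [IsDomain R] (h2 : (2 : R) ≠ 0) {Q : QuadraticForm R M}
    {v : M} (hv : Q v ≠ 0) (c : R) (x : M) (hx : x ∈ LinearMap.ker (Q.polarBilin v))
    (hcx : c • v + x = 0) : c = 0 := by
  have hpolar : polar Q v (c • v + x) = c * (2 * Q v) := by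
    rw [polar_add_right, polar_smul_right, polar_self, show polar Q v x = 0 from hx, add_zero,
      smul_eq_mul, two_nsmul, two_mul]
  rw [hcx, polar_zero_right] at hpolar
  exact (mul_eq_zero.1 hpolar.symm).resolve_right (mul_ne_zero h2 hv)

theorem exists_add_smul_mem_ker_polarBilin (h2 : IsUnit (2 : R)) {Q : QuadraticForm R M} {v : M}
    (hv : ∀ x, Q v ∣ Q x) (z : M) : ∃ c : R, z + c • v ∈ LinearMap.ker (Q.polarBilin v) := by
  obtain ⟨c, hc⟩ := h2.mul_left_dvd.2 (dvd_polar hv v z)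
  refine ⟨-c, ?_⟩
  change polar Q v (z + -c • v) = 0
  rw [polar_add_right, polar_smul_right, polar_self, hc, smul_eq_mul, two_nsmul]
  ring

theorem IsJordanBasis.mkFinCons {k : ℕ} {Q : QuadraticForm R M} {v : M} (hv : ∀ x, Q v ∣ Q x)
    {b : Module.Basis (Fin k) R (LinearMap.ker (Q.polarBilin v))}
    (hb : IsJordanBasis (Q.comp (Submodule.subtype _)) b)
    (hli : ∀ (c : R), ∀ x ∈ LinearMap.ker (Q.polarBilin v), c • v + x = 0 → c = 0)
    (hsp : ∀ z : M, ∃ c : R, z + c • v ∈ LinearMap.ker (Q.polarBilin v)) :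
    IsJordanBasis Q (Module.Basis.mkFinCons v b hli hsp) := by
  have hvb (i : Fin k) : polar Q v (b i) = 0 := (b i).2
  constructor <;> intro i j hij <;> rw [Module.Basis.coe_mkFinCons] <;>
    cases i using Fin.cases <;> cases j using Fin.cases
  case polar_eq_zero.zero.zero => exact absurd rfl hij
  case polar_eq_zero.zero.succ j => exact hvb j
  case polar_eq_zero.succ.zero i => exact (polar_comm ..).trans (hvb i)
  case polar_eq_zero.succ.succ i j => exact hb.polar_eq_zero i j fun h => hij (congrArg _ h)
  case dvd.succ.zero i => exact absurd hij (Fin.succ_pos i).not_ge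
  case dvd.succ.succ i j => exact hb.dvd i j (Fin.succ_le_succ_iff.1 hij)
  all_goals exact hv _

theorem exists_isJordanBasis [IsDomain R] [ValuationRing R] [IsPrincipalIdealRing R]
    [Module.Free R M] [Module.Finite R M] (h2 : IsUnit (2 : R)) (Q : QuadraticForm R M) {k : ℕ}
    (hk : Module.finrank R M = k) : ∃ b : Module.Basis (Fin k) R M, IsJordanBasis Q b := by
  induction k generalizing M with
  | zero => exact ⟨Module.finBasisOfFinrankEq R M hk, fun i => i.elim0, fun i => i.elim0⟩
  | succ k ih =>
    obtain ⟨v, hv⟩ := exists_forall_apply_dvd Q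
    by_cases hv0 : Q v = 0
    · have hQ : Q = 0 := by ext x; simpa [hv0] using hv x
      subst hQ
      exact ⟨Module.finBasisOfFinrankEq R M hk, fun i j _ => by simp [polar], by simp⟩
    · have hli := eq_zero_of_smul_add_eq_zero h2.ne_zero hv0
      have hsp := exists_add_smul_mem_ker_polarBilin h2 hv
      have hN : Module.finrank R (LinearMap.ker (Q.polarBilin v)) = k := by
        have := Module.finrank_eq_card_basis
          (Module.Basis.mkFinCons v (Module.finBasis R _) hli hsp)
        simpa [hk] using this.symm
      obtain ⟨b, hb⟩ := ih (Q.comp (Submodule.subtype _)) hN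
      exact ⟨_, hb.mkFinCons hv hli hsp⟩

theorem exists_equivalent_diagForm [IsDomain R] [ValuationRing R] [IsPrincipalIdealRing R] {n : ℕ}
    (h2 : IsUnit (2 : R)) (f : QuadraticForm R (Fin n → R)) :
    ∃ w : Fin n → R, (∀ i j, i ≤ j → w i ∣ w j) ∧ f.Equivalent (diagForm w) := by
  obtain ⟨b, hb⟩ := exists_isJordanBasis h2 f (Module.finrank_fin_fun R)
  refine ⟨fun i => f (b i), hb.dvd, ?_⟩
  let _ : Invertible (2 : R) := h2.invertible
  have hrepr : f.basisRepr b = diagForm fun i => f (b i) := by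
    refine basisRepr_eq_of_iIsOrtho f b fun i j hij => ?_
    simpa [associated_apply, polar] using .inr (hb.polar_eq_zero i j hij)
  exact hrepr ▸ ⟨f.isometryEquivBasisRepr b⟩

end Diagonalization

section Squares

theorem isSquare_pow_iff_even {G : Type*} [CommGroup G] {g : G} (hg : ¬IsSquare g) {k : ℕ} :
    IsSquare (g ^ k) ↔ Even k := by
  refine ⟨fun hk => ?_, fun hk => hk.isSquare_pow g⟩
  by_contra hodd
  obtain ⟨j, rfl⟩ := Nat.not_even_iff_odd.1 hodd
  have hdiv := hk.div ((even_two_mul j).isSquare_pow g)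
  rw [pow_succ, mul_div_cancel_left] at hdiv
  exact hg hdiv

theorem isSquare_mul_iff_of_finite {F : Type*} [Field F] [Finite F] {a b : F} (ha : a ≠ 0)
    (hb : b ≠ 0) : IsSquare (a * b) ↔ (IsSquare a ↔ IsSquare b) := by
  classical
  have := Fintype.ofFinite F
  rw [← quadraticChar_one_iff_isSquare ha, ← quadraticChar_one_iff_isSquare hb,
    ← quadraticChar_one_iff_isSquare (mul_ne_zero ha hb), map_mul]
  rcases quadraticChar_dichotomy ha with h | h <;>
    rcases quadraticChar_dichotomy hb with h' | h' <;> simp [h, h']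

open Polynomial in
theorem exists_sq_add_mul_sq_eq_of_finite {F : Type*} [Field F] [Finite F]
    (hF : ringChar F ≠ 2) {a : F} (ha : a ≠ 0) (b : F) : ∃ x y, x ^ 2 + a * y ^ 2 = b := by
  have := Fintype.ofFinite F
  obtain ⟨x, y, hxy⟩ := FiniteField.exists_root_sum_quadratic (f := X ^ 2)
    (g := C a * X ^ 2 + C 0 * X + C (-b)) (degree_X_pow 2) (degree_quadratic ha)
    (FiniteField.odd_card_of_char_ne_two hF)
  refine ⟨x, y, ?_⟩
  simp only [eval_pow, eval_X, eval_add, eval_mul, eval_C] at hxy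
  linear_combination hxy

theorem ringChar_residueField_ne_two {R : Type*} [CommRing R] [IsLocalRing R]
    (h2 : IsUnit (2 : R)) : ringChar (ResidueField R) ≠ 2 := by
  intro hchar
  have h0 : residue R 2 = 0 := by
    rw [map_ofNat]
    exact_mod_cast hchar ▸ ringChar.Nat.cast_ringChar (R := ResidueField R)
  exact (residue_ne_zero_iff_isUnit 2).2 h2 h0

variable {R : Type*} [CommRing R] [HenselianLocalRing R]

theorem isSquare_units_iff_residue (h2 : IsUnit (2 : R)) (u : Rˣ) :
    IsSquare u ↔ IsSquare (residue R u) := by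
  refine ⟨fun ⟨v, hv⟩ => ⟨residue R v, by rw [hv, Units.val_mul, map_mul]⟩, fun ⟨r, hr⟩ => ?_⟩
  obtain ⟨a, rfl⟩ := residue_surjective r
  have ha : IsUnit a := by
    refine (residue_ne_zero_iff_isUnit a).1 fun h0 => ?_
    exact (residue_ne_zero_iff_isUnit (u : R)).2 u.isUnit (by rw [hr, h0, zero_mul])
  have hroot : a ^ 2 - u ∈ maximalIdeal R := by
    rw [← residue_eq_zero_iff, map_sub, map_pow, hr, pow_two, sub_self]
  obtain ⟨v, hv, -⟩ := HenselianLocalRing.is_henselian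
    (Polynomial.X ^ 2 - Polynomial.C (u : R)) (Polynomial.monic_X_pow_sub_C _ two_ne_zero) a
    (by simpa only [Polynomial.eval_sub, Polynomial.eval_pow, Polynomial.eval_X,
      Polynomial.eval_C] using hroot) (by simpa [one_add_one_eq_two] using h2.mul ha)
  have hvu : v ^ 2 = u := by simpa [sub_eq_zero] using hv
  have hv_unit : IsUnit v := (isUnit_pow_iff two_ne_zero).1 (hvu ▸ u.isUnit)
  exact ⟨hv_unit.unit, Units.ext (by simp [← hvu, pow_two])⟩

theorem isSquare_div_of_sq_mul_eq (h2 : IsUnit (2 : R)) {u v c : Rˣ} {m r : R} (hr : ¬IsUnit r)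
    (h : (c : R) ^ 2 * u = v * m ^ 2 + r) : IsSquare (u / v) := by
  have hres := congrArg (residue R) h
  simp only [map_mul, map_pow, map_add, (residue_eq_zero_iff r).2 hr, add_zero] at hres
  rw [isSquare_units_iff_residue h2, div_eq_mul_inv, Units.val_mul, map_mul, map_units_inv]
  have hv : residue R v ≠ 0 := (residue_ne_zero_iff_isUnit _).2 v.isUnit
  have hc : residue R c ≠ 0 := (residue_ne_zero_iff_isUnit _).2 c.isUnit
  refine ⟨residue R m / residue R c, ?_⟩
  field_simp
  linear_combination hres

variable [Finite (ResidueField R)]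

theorem isSquare_units_mul_iff (h2 : IsUnit (2 : R)) (u v : Rˣ) :
    IsSquare (u * v) ↔ (IsSquare u ↔ IsSquare v) := by
  simp only [isSquare_units_iff_residue h2, Units.val_mul, map_mul]
  exact isSquare_mul_iff_of_finite ((residue_ne_zero_iff_isUnit _).2 u.isUnit)
    ((residue_ne_zero_iff_isUnit _).2 v.isUnit)

theorem isSquare_units_div_pow_iff (h2 : IsUnit (2 : R)) {ε : Rˣ} (hε : ¬IsSquare ε) (u : Rˣ)
    (k : ℕ) : IsSquare (u / ε ^ k) ↔ (IsSquare u ↔ Even k) := by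
  rw [div_eq_mul_inv, isSquare_units_mul_iff h2, isSquare_inv, isSquare_pow_iff_even hε]

theorem exists_not_isSquare_units (h2 : IsUnit (2 : R)) : ∃ ε : Rˣ, ¬IsSquare ε := by
  obtain ⟨r, hr⟩ := FiniteField.exists_nonsquare (ringChar_residueField_ne_two h2)
  obtain ⟨a, rfl⟩ := residue_surjective r
  have ha : IsUnit a := by
    refine (residue_ne_zero_iff_isUnit a).1 fun h0 => hr ?_
    rw [h0]
    exact IsSquare.zero
  exact ⟨ha.unit, by rwa [isSquare_units_iff_residue h2]⟩

theorem exists_sq_add_mul_sq_eq (h2 : IsUnit (2 : R)) (u v : Rˣ) :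
    ∃ x y : R, x ^ 2 + u * y ^ 2 = v := by
  obtain ⟨x, y, hxy⟩ := exists_sq_add_mul_sq_eq_of_finite (ringChar_residueField_ne_two h2)
    ((residue_ne_zero_iff_isUnit _).2 u.isUnit) (residue R v)
  obtain ⟨x, rfl⟩ := residue_surjective x
  obtain ⟨y, rfl⟩ := residue_surjective y
  have hμ : IsUnit (x ^ 2 + u * y ^ 2) := by
    rw [← residue_ne_zero_iff_isUnit, map_add, map_pow, map_mul, map_pow, hxy,
      residue_ne_zero_iff_isUnit]
    exact v.isUnit
  obtain ⟨μ, hμ⟩ := hμ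
  have hvμ : ¬IsUnit ((v : R) - μ) := by
    rw [← residue_ne_zero_iff_isUnit, not_not, hμ, map_sub, map_add, map_pow, map_mul, map_pow,
      hxy, sub_self]
  obtain ⟨w, hw⟩ : IsSquare (v / μ) :=
    isSquare_div_of_sq_mul_eq h2 (c := 1) (m := 1) hvμ (by rw [Units.val_one]; ring)
  have hμw : (v : R) = μ * (w * w) := by exact_mod_cast (div_eq_iff_eq_mul'.1 hw)
  exact ⟨x * w, y * w, by linear_combination (-(w : R) ^ 2) * hμ - hμw⟩

end Squares

section JordanForm

variable {R : Type*} [CommRing R] {ϖ : R} {a b : ℕ} {u v : Rˣ}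

/-- The ternary form `⟨1⟩ ⊥ ϖᵃ⟨u⟩ ⊥ ϖᵇ⟨v⟩`, the shape of a primitive form over a discrete valuation
ring with uniformizer `ϖ` and residue characteristic `≠ 2`, up to similarity. -/
def jordanForm (ϖ : R) (a b : ℕ) (u v : Rˣ) : QuadraticForm R (Fin 3 → R) :=
  diagForm ![1, u * ϖ ^ a, v * ϖ ^ b]

theorem isPrimitiveForm_jordanForm : IsPrimitiveForm (jordanForm ϖ a b u v) :=
  isPrimitiveForm_of_isUnit (i := 0) (by simp [jordanForm, diagForm_apply_single])

theorem associated_det_gramMatrix_jordanForm (h2 : IsUnit (2 : R)) :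
    Associated (gramMatrix (jordanForm ϖ a b u v)).det (ϖ ^ (a + b)) := by
  have hdet : (gramMatrix (jordanForm ϖ a b u v)).det = 2 ^ 3 * (u * v) * ϖ ^ (a + b) := by
    rw [jordanForm, det_gramMatrix_diagForm, Fin.prod_univ_three]
    simp only [Matrix.cons_val]
    ring
  rw [hdet]
  exact associated_unit_mul_left _ _ ((h2.pow 3).mul (u * v).isUnit)

theorem exists_similarForm_jordanForm [IsDomain R] [IsDiscreteValuationRing R]
    (h2 : IsUnit (2 : R)) (hϖ : Irreducible ϖ) {n : ℕ} {f : QuadraticForm R (Fin 3 → R)}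
    (hf : IsPrimitiveForm f) (hdet : Associated (gramMatrix f).det (ϖ ^ n)) :
    ∃ a b u v, a ≤ b ∧ a + b = n ∧ SimilarForm f (jordanForm ϖ a b u v) := by
  obtain ⟨w, hw, ⟨e⟩⟩ := exists_equivalent_diagForm h2 f
  obtain ⟨w₀, hw₀⟩ : IsUnit (w 0) := hf.isUnit_of_forall_dvd fun x => by
    rw [← e.map_app x, diagForm_apply]
    exact Finset.dvd_sum fun i _ => (hw 0 i (Fin.zero_le i)).mul_right _
  have hne : ∏ i, w i ≠ 0 := fun h0 => by
    have hassoc := (SimilarForm.of_equivalent ⟨e⟩).associated_det_gramMatrix.symm.trans hdet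
    rw [det_gramMatrix_diagForm, h0, mul_zero, Associated.comm, associated_zero_iff_eq_zero]
      at hassoc
    exact pow_ne_zero n hϖ.ne_zero hassoc
  rw [Fin.prod_univ_three] at hne
  obtain ⟨a, u, hu⟩ := IsDiscreteValuationRing.eq_unit_mul_pow_irreducible
    (right_ne_zero_of_mul (left_ne_zero_of_mul hne)) hϖ
  obtain ⟨b, v, hv⟩ := IsDiscreteValuationRing.eq_unit_mul_pow_irreducible
    (right_ne_zero_of_mul hne) hϖ
  have hsim : SimilarForm f (jordanForm ϖ a b (w₀⁻¹ * u) (w₀⁻¹ * v)) := by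
    refine (SimilarForm.of_equivalent ⟨e⟩).trans
      (similarForm_diagForm_of_forall_mul_eq w₀⁻¹ 1 fun i => ?_)
    fin_cases i <;> simp [← hw₀, hu, hv, mul_assoc]
  have hpow {i j : ℕ} : ϖ ^ i ∣ ϖ ^ j ↔ i ≤ j := pow_dvd_pow_iff hϖ.ne_zero hϖ.not_isUnit
  refine ⟨a, b, _, _, ?_, ?_, hsim⟩
  · have hdvd := hw 1 2 (by decide)
    rwa [hu, hv, Units.dvd_mul_left, Units.mul_left_dvd, hpow] at hdvd
  · have hassoc := ((associated_det_gramMatrix_jordanForm h2).symm.trans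
      hsim.associated_det_gramMatrix.symm).trans hdet
    exact le_antisymm (hpow.1 hassoc.dvd) (hpow.1 hassoc.symm.dvd)

end JordanForm

section Reduction

variable {R : Type*} [CommRing R] {ϖ : R} {a b : ℕ} {u v u' v' : Rˣ}

theorem similarForm_jordanForm_of_isSquare (hu : IsSquare (u / u')) (hv : IsSquare (v / v')) :
    SimilarForm (jordanForm ϖ a b u v) (jordanForm ϖ a b u' v') := by
  obtain ⟨s, hs⟩ := hu
  obtain ⟨t, ht⟩ := hv
  rw [div_eq_iff_eq_mul'] at hs ht
  refine similarForm_diagForm_of_forall_mul_eq 1 ![1, s, t] fun i => ?_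
  fin_cases i
  · simp
  · simp [hs]; ring
  · simp [ht]; ring

-- Multiplication by `x + y √(-u)` multiplies the norm form `⟨1, u⟩` by the norm `x² + u y² = v`.
theorem diagForm_cons_mul_equivalent {x y : R} (h : x ^ 2 + u * y ^ 2 = v) (s z : R) :
    (diagForm ![v * s, v * (u * s), z]).Equivalent (diagForm ![s, u * s, z]) := by
  have hdet : (!![x, -(u * y), 0; y, x, 0; 0, 0, 1] : Matrix (Fin 3) (Fin 3) R).det = v := by
    rw [Matrix.det_fin_three, ← h]
    simp only [Matrix.of_apply, Matrix.cons_val]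
    ring
  refine equivalent_of_forall_mulVec (hdet ▸ v.isUnit) fun r => ?_
  simp only [diagForm_cons_three, Matrix.mulVec, dotProduct, Fin.sum_univ_three, Matrix.of_apply,
    Matrix.cons_val, ← h]
  ring

variable [HenselianLocalRing R] [Finite (ResidueField R)]

theorem similarForm_jordanForm_zero (h2 : IsUnit (2 : R)) (v' : Rˣ) :
    SimilarForm (jordanForm ϖ 0 b u v) (jordanForm ϖ 0 b u v') := by
  let c := v' / v
  obtain ⟨x, y, hxy⟩ := exists_sq_add_mul_sq_eq h2 u c
  have hscale : SimilarForm (jordanForm ϖ 0 b u v)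
      (diagForm ![c * 1, c * (u * 1), v' * ϖ ^ b]) := by
    refine similarForm_diagForm_of_forall_mul_eq c 1 fun i => ?_
    have hc : (v' : R) = c * v := by rw [← Units.val_mul, div_mul_cancel]
    fin_cases i
    · simp
    · simp
    · simp [hc, mul_assoc]
  have hnorm := SimilarForm.of_equivalent (diagForm_cons_mul_equivalent hxy 1 (v' * ϖ ^ b))
  simpa [jordanForm] using hscale.trans hnorm

theorem similarForm_jordanForm_mul_mul (h2 : IsUnit (2 : R)) (c : Rˣ) :
    SimilarForm (jordanForm ϖ a a u v) (jordanForm ϖ a a (c * u) (c * v)) := by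
  obtain ⟨x, y, hxy⟩ := exists_sq_add_mul_sq_eq h2 (v / u) c
  have hv : (v : R) = (v / u : Rˣ) * u := by rw [← Units.val_mul, div_mul_cancel]
  have hrotate (w : Fin 3 → R) : SimilarForm (diagForm ![w 1, w 2, w 0]) (diagForm w) := by
    convert SimilarForm.of_equivalent (diagForm_comp_equivalent w (finRotate 3)) using 2
    ext i
    fin_cases i <;> rfl
  have hnorm := SimilarForm.of_equivalent (diagForm_cons_mul_equivalent hxy (u * ϖ ^ a) 1)
  refine ((hrotate _).symm.trans ?_).trans (hrotate _)
  convert hnorm.symm using 2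
  · simp [hv, mul_assoc]
  · simp [hv, mul_assoc]

end Reduction

section Invariants

variable {R : Type*} [CommRing R]

section DiagonalIsometry

variable {c y z y' z' : R}
  (e : (c • diagForm ![1, y, z]).IsometryEquiv (diagForm ![1, y', z']))

include e

theorem exists_sq_add_eq_of_isometryEquiv :
    ∃ k l m : R, c = k ^ 2 + y' * l ^ 2 + z' * m ^ 2 := by
  have h₀ := e.map_app (Pi.single 0 1)
  rw [smul_apply, diagForm_apply_single, diagForm_cons_three] at h₀
  exact ⟨_, _, _, by simpa using h₀.symm⟩

variable [IsDomain R] (h2 : (2 : R) ≠ 0)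

include h2

theorem exists_sq_mul_eq_of_isometryEquiv :
    ∃ k l m : R, c ^ 2 * y = y' * k ^ 2 + z' * l ^ 2 + y' * z' * m ^ 2 := by
  let r := e (Pi.single 0 1)
  let s := e (Pi.single 1 1)
  have hr : r 0 ^ 2 + y' * r 1 ^ 2 + z' * r 2 ^ 2 = c := by
    have h := e.map_app (Pi.single 0 1)
    rw [smul_apply, diagForm_apply_single, diagForm_cons_three] at h
    simpa using h
  have hs : s 0 ^ 2 + y' * s 1 ^ 2 + z' * s 2 ^ 2 = c * y := by
    have h := e.map_app (Pi.single 1 1)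
    rw [smul_apply, diagForm_apply_single, diagForm_cons_three] at h
    simpa using h
  have hrs : r 0 * s 0 + y' * (r 1 * s 1) + z' * (r 2 * s 2) = 0 := by
    have h : polar (diagForm ![1, y', z']) r s = 0 := by
      have hpolar : polar (diagForm ![1, y', z']) r s =
          polar (c • diagForm ![1, y, z]) (Pi.single 0 1) (Pi.single 1 1) := by
        simp only [polar, r, s, ← map_add, e.map_app]
      simp [hpolar, polar_smul, polar_diagForm, Fin.sum_univ_three]
    rw [polar_diagForm] at h
    simpa [Fin.sum_univ_three, h2] using h
  -- Lagrange's identity for the orthogonal vectors `r` and `s`.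
  refine ⟨r 0 * s 1 - r 1 * s 0, r 0 * s 2 - r 2 * s 0, r 1 * s 2 - r 2 * s 1, ?_⟩
  linear_combination (-c) * hs - (s 0 ^ 2 + y' * s 1 ^ 2 + z' * s 2 ^ 2) * hr +
    (r 0 * s 0 + y' * (r 1 * s 1) + z' * (r 2 * s 2)) * hrs

theorem exists_pow_three_mul_eq_of_isometryEquiv :
    ∃ d : Rˣ, c ^ 3 * (y * z) = d ^ 2 * (y' * z') := by
  obtain ⟨d, hd⟩ := exists_det_gramMatrix_eq e
  refine ⟨d, mul_left_cancel₀ (pow_ne_zero 3 h2) ?_⟩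
  simp only [gramMatrix_smul, Matrix.det_smul, det_gramMatrix_diagForm, Fintype.card_fin,
    Fin.prod_univ_three, Matrix.cons_val] at hd
  linear_combination hd

end DiagonalIsometry

variable [IsDomain R] {ϖ : R} {a b a' b' : ℕ} {u v u' v' : Rˣ}

theorem le_of_similarForm_jordanForm (h2 : (2 : R) ≠ 0) (hϖ : Irreducible ϖ) (hab : a' ≤ b')
    (h : SimilarForm (jordanForm ϖ a b u v) (jordanForm ϖ a' b' u' v')) : a' ≤ a := by
  obtain ⟨c, ⟨e⟩⟩ := h
  obtain ⟨k, l, m, hklm⟩ := exists_sq_mul_eq_of_isometryEquiv e h2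
  obtain ⟨d, rfl⟩ := Nat.exists_eq_add_of_le hab
  rw [← pow_dvd_pow_iff hϖ.ne_zero hϖ.not_isUnit, ← (c ^ 2 * u).dvd_mul_left]
  refine ⟨u' * k ^ 2 + v' * ϖ ^ d * l ^ 2 + u' * (v' * ϖ ^ (a' + d)) * m ^ 2, ?_⟩
  push_cast
  linear_combination hklm

theorem eq_of_similarForm_jordanForm (h2 : (2 : R) ≠ 0) (hϖ : Irreducible ϖ) (hab : a ≤ b)
    (hab' : a' ≤ b') (h : SimilarForm (jordanForm ϖ a b u v) (jordanForm ϖ a' b' u' v')) :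
    a = a' :=
  le_antisymm (le_of_similarForm_jordanForm h2 hϖ hab h.symm)
    (le_of_similarForm_jordanForm h2 hϖ hab' h)

variable [HenselianLocalRing R] (h2 : IsUnit (2 : R)) (hϖ : Irreducible ϖ)

include h2 hϖ

theorem isSquare_div_of_similarForm_jordanForm (hab : a < b)
    (h : SimilarForm (jordanForm ϖ a b u v) (jordanForm ϖ a b u' v')) : IsSquare (u / u') := by
  obtain ⟨c, ⟨e⟩⟩ := h
  obtain ⟨k, l, m, hklm⟩ := exists_sq_mul_eq_of_isometryEquiv e h2.ne_zero
  obtain ⟨d, rfl⟩ := Nat.exists_eq_add_of_lt hab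
  refine isSquare_div_of_sq_mul_eq h2 (c := c) (m := k)
    (r := ϖ * (v' * ϖ ^ d * l ^ 2 + u' * (v' * ϖ ^ (a + d)) * m ^ 2))
    (not_isUnit_of_not_isUnit_dvd hϖ.not_isUnit (dvd_mul_right ..)) ?_
  refine mul_left_cancel₀ (pow_ne_zero a hϖ.ne_zero) ?_
  linear_combination hklm

theorem isSquare_mul_div_of_similarForm_jordanForm (ha : a ≠ 0) (hb : b ≠ 0)
    (h : SimilarForm (jordanForm ϖ a b u v) (jordanForm ϖ a b u' v')) :
    IsSquare (u * v / (u' * v')) := by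
  obtain ⟨c, ⟨e⟩⟩ := h
  have hc : IsSquare c := by
    obtain ⟨k, l, m, hklm⟩ := exists_sq_add_eq_of_isometryEquiv e
    have hdvd : ϖ ∣ u' * ϖ ^ a * l ^ 2 + v' * ϖ ^ b * m ^ 2 :=
      dvd_add (((dvd_pow_self ϖ ha).mul_left _).mul_right _)
        (((dvd_pow_self ϖ hb).mul_left _).mul_right _)
    simpa using isSquare_div_of_sq_mul_eq h2 (u := c) (v := 1) (c := 1) (m := k)
      (not_isUnit_of_not_isUnit_dvd hϖ.not_isUnit hdvd)
      (by simp [hklm, add_assoc])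
  obtain ⟨d, hd⟩ := exists_pow_three_mul_eq_of_isometryEquiv e h2.ne_zero
  have hdet : c ^ 3 * (u * v) = d ^ 2 * (u' * v') := by
    refine Units.ext (mul_left_cancel₀ (pow_ne_zero (a + b) hϖ.ne_zero) ?_)
    push_cast
    linear_combination hd
  have hdiv : u * v / (u' * v') = d ^ 2 / c ^ 3 := by
    rw [div_eq_div_iff_mul_eq_mul, mul_comm, hdet]
  exact hdiv ▸ (IsSquare.sq d).div (hc.pow 3)

end Invariants

section Counting

theorem natCard_quot_eq_of_representatives {α ι : Type*} {r : α → α → Prop} (hr : Equivalence r)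
    (rep : ι → α) (hinj : ∀ i j, r (rep i) (rep j) → i = j) (hsurj : ∀ x, ∃ i, r x (rep i)) :
    Nat.card (Quot r) = Nat.card ι := by
  refine (Nat.card_congr
    (Equiv.ofBijective (fun i => Quot.mk r (rep i)) ⟨fun i j hij => ?_, ?_⟩)).symm
  · exact hinj i j (hr.eqvGen_iff.1 (Quot.eqvGen_exact hij))
  · rintro ⟨x⟩
    obtain ⟨i, hi⟩ := hsurj x
    exact ⟨i, (Quot.sound hi).symm⟩

variable {R : Type*} [CommRing R] {ϖ : R} {ε : Rˣ} {n : ℕ}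

/-- Representatives of the similarity classes of primitive ternary forms of discriminant `(ϖⁿ)`, for
a nonsquare unit `ε`. As `m` runs over `0, …, n - 1`, the pair `(⌈m / 2⌉, m mod 2)` takes each value
`(a, k)` with `0 < a < n - a` once, but `a = 0` only with `k = 0` and `a = n - a` only with `k = 1`:
in these two cases one of the two unit classes is redundant. -/
def representative (ϖ : R) (ε : Rˣ) (i : Fin n × Fin 2) : QuadraticForm R (Fin 3 → R) :=
  jordanForm ϖ ((i.1 + 1) / 2) (n - (i.1 + 1) / 2) (ε ^ i.2.val) (ε ^ i.1.val)

theorem associated_det_gramMatrix_representative (h2 : IsUnit (2 : R)) (i : Fin n × Fin 2) :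
    Associated (gramMatrix (representative ϖ ε i)).det (ϖ ^ n) := by
  rw [representative]
  convert associated_det_gramMatrix_jordanForm h2 using 2
  omega

variable [HenselianLocalRing R] [Finite (ResidueField R)] (h2 : IsUnit (2 : R))
  (hε : ¬IsSquare ε)

include h2 hε

theorem isSquare_pow_div_pow_iff (k l : ℕ) : IsSquare (ε ^ k / ε ^ l) ↔ (Even k ↔ Even l) := by
  rw [isSquare_units_div_pow_iff h2 hε, isSquare_pow_iff_even hε]

theorem exists_isSquare_div_pow (u : Rˣ) : ∃ k : Fin 2, IsSquare (u / ε ^ k.val) := by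
  by_cases hu : IsSquare u
  · exact ⟨0, by simpa using hu⟩
  · exact ⟨1, (isSquare_units_div_pow_iff h2 hε u 1).2 (by simp [hu])⟩

theorem eq_of_similarForm_representative [IsDomain R] (hϖ : Irreducible ϖ) (i j : Fin n × Fin 2)
    (h : SimilarForm (representative ϖ ε i) (representative ϖ ε j)) : i = j := by
  have hexp : (i.1.val + 1) / 2 = (j.1.val + 1) / 2 :=
    eq_of_similarForm_jordanForm h2.ne_zero hϖ (by omega) (by omega) h
  rw [representative, representative, ← hexp] at h
  have hfirst : (i.1.val + 1) / 2 < n - (i.1 + 1) / 2 → (Even i.2.val ↔ Even j.2.val) := fun hab =>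
    (isSquare_pow_div_pow_iff h2 hε _ _).1 (isSquare_div_of_similarForm_jordanForm h2 hϖ hab h)
  have hprod : (i.1.val + 1) / 2 ≠ 0 → (Even (i.2.val + i.1.val) ↔ Even (j.2.val + j.1.val)) := by
    intro ha
    have hsq := isSquare_mul_div_of_similarForm_jordanForm h2 hϖ ha (by omega) h
    rwa [← pow_add, ← pow_add, isSquare_pow_div_pow_iff h2 hε] at hsq
  simp only [Nat.even_iff] at hfirst hprod
  ext <;> omega

theorem exists_similarForm_representative {a b : ℕ} (hab : a ≤ b) (hn : a + b ≠ 0) (u v : Rˣ) :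
    ∃ i : Fin (a + b) × Fin 2, SimilarForm (jordanForm ϖ a b u v) (representative ϖ ε i) := by
  suffices ∃ (m : ℕ) (k : Fin 2), m < a + b ∧ (m + 1) / 2 = a ∧
      SimilarForm (jordanForm ϖ a b u v) (jordanForm ϖ a b (ε ^ k.val) (ε ^ m)) by
    obtain ⟨m, k, hm, ha, h⟩ := this
    refine ⟨(⟨m, hm⟩, k), ?_⟩
    simpa only [representative, ha, Nat.add_sub_cancel_left] using h
  obtain ⟨k, hu⟩ := exists_isSquare_div_pow h2 hε u
  rcases Nat.eq_zero_or_pos a with rfl | ha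
  · refine ⟨0, k, by omega, rfl, (similarForm_jordanForm_zero h2 (ε ^ 0)).trans ?_⟩
    exact similarForm_jordanForm_of_isSquare hu (by simp)
  rcases hab.lt_or_eq with hab | rfl
  · obtain ⟨l, hv⟩ := exists_isSquare_div_pow h2 hε v
    refine ⟨2 * a - l, k, by omega, by omega, similarForm_jordanForm_of_isSquare hu ?_⟩
    rw [isSquare_units_div_pow_iff h2 hε] at hv ⊢
    rw [hv, Nat.even_iff, Nat.even_iff]
    omega
  · let c := ε ^ (2 * a - 1) / v
    obtain ⟨l, hl⟩ := exists_isSquare_div_pow h2 hε (c * u)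
    refine ⟨2 * a - 1, l, by omega, by omega, (similarForm_jordanForm_mul_mul h2 c).trans ?_⟩
    exact similarForm_jordanForm_of_isSquare hl (by simp [c])

end Counting

section Padic

variable {p : ℕ} [Fact p.Prime]

theorem henselianLocalRing_padicInt : HenselianLocalRing ℤ_[p] where
  is_henselian f hf a₀ h₁ h₂ :=
    (IsAdicComplete.henselianRing ℤ_[p] (maximalIdeal ℤ_[p])).is_henselian f hf a₀ h₁ (h₂.map _)

theorem finite_residueField_padicInt : Finite (ResidueField ℤ_[p]) :=
  .of_equiv _ PadicInt.residueField.symm.toEquiv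

theorem isUnit_two_padicInt (hp : p ≠ 2) : IsUnit (2 : ℤ_[p]) := by
  by_contra h
  have hp2 : (p : ℤ) ∣ (2 : ℕ) :=
    (PadicInt.norm_int_lt_one_iff_dvd _).1 (by exact_mod_cast PadicInt.not_isUnit_iff.1 h)
  exact hp ((Nat.prime_dvd_prime_iff_eq Fact.out Nat.prime_two).1 (Int.natCast_dvd_natCast.1 hp2))

end Padic

theorem stmt_15_general {R : Type*} [CommRing R] [IsDomain R] [IsDiscreteValuationRing R]
    [HenselianLocalRing R] [Finite (ResidueField R)] (h2 : IsUnit (2 : R)) {ϖ : R}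
    (hϖ : Irreducible ϖ) {n : ℕ} (hn : 1 ≤ n) :
    Nat.card (Quot (fun (f g : {f : QuadraticForm R (Fin 3 → R) //
        IsPrimitiveForm f ∧ (gramMatrix f).det ≠ 0 ∧
          Ideal.span {(gramMatrix f).det} = Ideal.span {ϖ ^ n}}) =>
      SimilarForm f.1 g.1)) = 2 * n := by
  obtain ⟨ε, hε⟩ := exists_not_isSquare_units h2
  have hdet (i : Fin n × Fin 2) := associated_det_gramMatrix_representative (ϖ := ϖ) (ε := ε) h2 i
  trans Nat.card (Fin n × Fin 2)
  · refine natCard_quot_eq_of_representatives (similarForm_equivalence.comap Subtype.val)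
      (fun i => ⟨representative ϖ ε i, isPrimitiveForm_jordanForm,
        (hdet i).ne_zero_iff.2 (pow_ne_zero n hϖ.ne_zero),
        Ideal.span_singleton_eq_span_singleton.2 (hdet i)⟩)
      (eq_of_similarForm_representative h2 hε hϖ) ?_
    rintro ⟨f, hf, -, hspan⟩
    obtain ⟨a, b, u, v, hab, rfl, hfJ⟩ := exists_similarForm_jordanForm h2 hϖ hf
      (Ideal.span_singleton_eq_span_singleton.1 hspan)
    obtain ⟨i, hi⟩ := exists_similarForm_representative h2 hε hab (Nat.pos_iff_ne_zero.1 hn) u v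
    exact ⟨i, hfJ.trans hi⟩
  · simp [mul_comm]

theorem stmt_15 (p : ℕ) [Fact p.Prime] (hp : p ≠ 2) (n : ℕ) (hn : 1 ≤ n) :
    Nat.card (Quot (fun (f g : {f : QuadraticForm ℤ_[p] (Fin 3 → ℤ_[p]) //
        IsPrimitiveForm f ∧ (gramMatrix f).det ≠ 0 ∧
          Ideal.span {(gramMatrix f).det} = Ideal.span {(p : ℤ_[p]) ^ n}}) =>
      SimilarForm f.1 g.1)) = 2 * n := by
  have : HenselianLocalRing ℤ_[p] := henselianLocalRing_padicInt
  have : Finite (ResidueField ℤ_[p]) := finite_residueField_padicInt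
  exact stmt_15_general (isUnit_two_padicInt hp) PadicInt.irreducible_p hn
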